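/- arXiv:2410.01463 — 2 statements merged into one kernel-verified Lean document; each statement's English description precedes it below -/
import Mathlib

section
/- Let B ∈ ℝ^{k×r}, A ∈ ℝ^{r×d}, G ∈ ℝ^{k×d}, and let η ≥ 0 and constants C_A, C_B, Γ, c_A, c_B ∈ ℝ satisfy ‖A‖_F ≤ C_A, ‖B‖_F ≤ C_B, ‖G‖_F ≤ Γ, ⟨Aᵀ A, Gᵀ G⟩_F ≥ c_A ‖G‖_F², and ⟨G Gᵀ, B Bᵀ⟩_F ≥ c_B ‖G‖_F². Then ⟨(B − η G Aᵀ)(A − η Bᵀ G) − B A, G⟩_F ≤ η² C_A C_B Γ³ − η (c_A + c_B) ‖G‖_F². -/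
open Matrix

attribute [local instance] Matrix.frobeniusNormedAddCommGroup Matrix.frobeniusNormedSpace

theorem frob_norm_sq_aux {m n : ℕ} (X : Matrix (Fin m) (Fin n) ℝ) :
    ‖X‖ = Real.sqrt (∑ p : Fin m × Fin n, X p.1 p.2 ^ 2) := by
  rw [Matrix.frobenius_norm_def, Real.sqrt_eq_rpow, Fintype.sum_prod_type]
  simp

theorem frob_cs_aux {m n : ℕ} (X Y : Matrix (Fin m) (Fin n) ℝ) :
    (Xᵀ * Y).trace ≤ ‖X‖ * ‖Y‖ := by
  have h : (Xᵀ * Y).trace = ∑ p : Fin m × Fin n, X p.1 p.2 * Y p.1 p.2 := by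
    rw [Fintype.sum_prod_type, Finset.sum_comm]
    simp [Matrix.trace, Matrix.mul_apply]
  rw [h, frob_norm_sq_aux, frob_norm_sq_aux]
  exact Real.sum_mul_le_sqrt_mul_sqrt _ _ _

/-- One-step descent inner product bound: under the bounded-factor,
bounded-gradient and eigenvalue-type assumptions,
`⟨(B − η G Aᵀ)(A − η Bᵀ G) − B A, G⟩_F ≤ η² C_A C_B Γ³ − η (c_A + c_B) ‖G‖_F²`. -/
theorem fedsa_lora_descent_inner_bound
    (k r d : ℕ) (B : Matrix (Fin k) (Fin r) ℝ) (A : Matrix (Fin r) (Fin d) ℝ)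
    (G : Matrix (Fin k) (Fin d) ℝ) (η : ℝ) (hη : 0 ≤ η)
    (CA CB Γ cA cB : ℝ)
    (hA : ‖A‖ ≤ CA) (hB : ‖B‖ ≤ CB) (hG : ‖G‖ ≤ Γ)
    (hcA : cA * ‖G‖ ^ 2 ≤ ((Aᵀ * A)ᵀ * (Gᵀ * G)).trace)
    (hcB : cB * ‖G‖ ^ 2 ≤ ((G * Gᵀ)ᵀ * (B * Bᵀ)).trace) :
    (((B - η • (G * Aᵀ)) * (A - η • (Bᵀ * G)) - B * A)ᵀ * G).trace ≤
      η ^ 2 * CA * CB * Γ ^ 3 - η * (cA + cB) * ‖G‖ ^ 2 := by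
  have hA0 := norm_nonneg A
  have hB0 := norm_nonneg B
  have hG0 := norm_nonneg G
  have e : (B - η • (G * Aᵀ)) * (A - η • (Bᵀ * G)) - B * A
      = η ^ 2 • (G * Aᵀ * (Bᵀ * G)) - η • (B * (Bᵀ * G)) - η • (G * Aᵀ * A) := by
    simp only [Matrix.sub_mul, Matrix.mul_sub, Matrix.smul_mul, Matrix.mul_smul, smul_sub, smul_smul,
      pow_two]
    abel
  have e1 : ((B * (Bᵀ * G))ᵀ * G).trace = ((G * Gᵀ)ᵀ * (B * Bᵀ)).trace := by
    simp only [Matrix.transpose_mul, Matrix.transpose_transpose, Matrix.mul_assoc]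
    rw [Matrix.trace_mul_comm]
    simp only [Matrix.mul_assoc]
    rw [Matrix.trace_mul_comm]
    simp only [Matrix.mul_assoc]
    rw [Matrix.trace_mul_comm]
    simp only [Matrix.mul_assoc]
  have e2 : ((G * Aᵀ * A)ᵀ * G).trace = ((Aᵀ * A)ᵀ * (Gᵀ * G)).trace := by
    simp only [Matrix.transpose_mul, Matrix.transpose_transpose, Matrix.mul_assoc]
  have e3 : ((G * Aᵀ * (Bᵀ * G))ᵀ * G).trace ≤ CA * CB * Γ ^ 3 := by
    refine (frob_cs_aux _ _).trans ?_
    have h1 : ‖G * Aᵀ‖ ≤ Γ * CA := by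
      refine (Matrix.frobenius_norm_mul _ _).trans ?_
      rw [Matrix.frobenius_norm_transpose]
      gcongr
      exact hG0.trans hG
    have h2 : ‖Bᵀ * G‖ ≤ CB * Γ := by
      refine (Matrix.frobenius_norm_mul _ _).trans ?_
      rw [Matrix.frobenius_norm_transpose]
      gcongr
      exact hB0.trans hB
    have hΓ := hG0.trans hG
    have hCA := hA0.trans hA
    have hCB := hB0.trans hB
    calc ‖G * Aᵀ * (Bᵀ * G)‖ * ‖G‖ ≤ (Γ * CA) * (CB * Γ) * Γ := by
          refine mul_le_mul ((Matrix.frobenius_norm_mul _ _).trans ?_) hG hG0 (by positivity)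
          exact mul_le_mul h1 h2 (norm_nonneg _) (by positivity)
      _ = CA * CB * Γ ^ 3 := by ring
  rw [e]
  simp only [Matrix.transpose_sub, Matrix.transpose_smul, Matrix.sub_mul, Matrix.smul_mul,
    Matrix.trace_sub, Matrix.trace_smul, smul_eq_mul]
  rw [e1, e2]
  have f1 := mul_le_mul_of_nonneg_left hcA hη
  have f2 := mul_le_mul_of_nonneg_left hcB hη
  have f3 := mul_le_mul_of_nonneg_left e3 (sq_nonneg η)
  linarith
end

section
/- Let B ∈ ℝ^{k×r}, A ∈ ℝ^{r×d}, G ∈ ℝ^{k×d}, let η ≥ 0, L ≥ 0, and constants C_A, C_B, Γ, c_A, c_B satisfy ‖A‖_F ≤ C_A, ‖B‖_F ≤ C_B, ‖G‖_F ≤ Γ, ⟨Aᵀ A, Gᵀ G⟩_F ≥ c_A ‖G‖_F², and ⟨G Gᵀ, B Bᵀ⟩_F ≥ c_B ‖G‖_F². Set D := (B − η G Aᵀ)(A − η Bᵀ G) − B A, and let f_W, f_U ∈ ℝ be real numbers satisfying the smoothness inequality f_U ≤ f_W + ⟨D, G⟩_F + (L/2) ‖D‖_F². Then f_U ≤ f_W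 + η² C_A C_B Γ³ + (3L/2)(η⁴ C_A² C_B² Γ⁴ + η² C_A⁴ Γ² + η² C_B⁴ Γ²) − η (c_A + c_B) ‖G‖_F². -/
open Matrix

attribute [local instance] Matrix.frobeniusNormedAddCommGroup Matrix.frobeniusNormedSpace

theorem frob_cs {k d : ℕ} (X Y : Matrix (Fin k) (Fin d) ℝ) :
    (Xᵀ * Y).trace ≤ ‖X‖ * ‖Y‖ := by
  have e : ∀ Z : Matrix (Fin k) (Fin d) ℝ,
      ‖Z‖ = Real.sqrt (∑ p : Fin k × Fin d, Z p.1 p.2 ^ 2) := by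
    intro Z
    rw [Matrix.frobenius_norm_def, Real.sqrt_eq_rpow, Fintype.sum_prod_type]
    simp
  have t : (Xᵀ * Y).trace = ∑ p : Fin k × Fin d, X p.1 p.2 * Y p.1 p.2 := by
    rw [Fintype.sum_prod_type_right]
    simp [Matrix.trace, Matrix.mul_apply]
  rw [t, e, e]
  exact Real.sum_mul_le_sqrt_mul_sqrt _ _ _

theorem frob_mul3 {k l m n : ℕ} (X : Matrix (Fin k) (Fin l) ℝ) (Y : Matrix (Fin l) (Fin m) ℝ)
    (Z : Matrix (Fin m) (Fin n) ℝ) : ‖X * Y * Z‖ ≤ ‖X‖ * ‖Y‖ * ‖Z‖ :=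
  (Matrix.frobenius_norm_mul _ _).trans
    (mul_le_mul_of_nonneg_right (Matrix.frobenius_norm_mul _ _) (norm_nonneg _))

/-- One-step descent inequality (Eq. main-ineq-1 in the proof of Theorem 1):
from the smoothness inequality `f_U ≤ f_W + ⟨D, G⟩_F + (L/2)‖D‖_F²` with
`D = (B − η G Aᵀ)(A − η Bᵀ G) − B A`, one obtains
`f_U ≤ f_W + η² C_A C_B Γ³ + (3L/2)(η⁴ C_A² C_B² Γ⁴ + η² C_A⁴ Γ² + η² C_B⁴ Γ²)
      − η (c_A + c_B) ‖G‖_F²`. -/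
theorem fedsa_lora_one_step_descent
    (k r d : ℕ) (B : Matrix (Fin k) (Fin r) ℝ) (A : Matrix (Fin r) (Fin d) ℝ)
    (G : Matrix (Fin k) (Fin d) ℝ) (η L : ℝ) (hη : 0 ≤ η) (hL : 0 ≤ L)
    (CA CB Γ cA cB : ℝ)
    (hA : ‖A‖ ≤ CA) (hB : ‖B‖ ≤ CB) (hG : ‖G‖ ≤ Γ)
    (hcA : cA * ‖G‖ ^ 2 ≤ ((Aᵀ * A)ᵀ * (Gᵀ * G)).trace)
    (hcB : cB * ‖G‖ ^ 2 ≤ ((G * Gᵀ)ᵀ * (B * Bᵀ)).trace)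
    (D : Matrix (Fin k) (Fin d) ℝ)
    (hD : D = (B - η • (G * Aᵀ)) * (A - η • (Bᵀ * G)) - B * A)
    (fW fU : ℝ)
    (hsmooth : fU ≤ fW + (Dᵀ * G).trace + (L / 2) * ‖D‖ ^ 2) :
    fU ≤ fW + η ^ 2 * CA * CB * Γ ^ 3 +
        (3 * L / 2) * (η ^ 4 * CA ^ 2 * CB ^ 2 * Γ ^ 4 + η ^ 2 * CA ^ 4 * Γ ^ 2 +
          η ^ 2 * CB ^ 4 * Γ ^ 2) -
        η * (cA + cB) * ‖G‖ ^ 2 := by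
  have hA0 := norm_nonneg A
  have hB0 := norm_nonneg B
  have hG0 := norm_nonneg G
  have hCA : 0 ≤ CA := hA0.trans hA
  have hCB : 0 ≤ CB := hB0.trans hB
  have hΓ : 0 ≤ Γ := hG0.trans hG
  obtain ⟨P, hP⟩ : ∃ P, P = B * Bᵀ * G := ⟨_, rfl⟩
  obtain ⟨Q, hQ⟩ : ∃ Q, Q = G * Aᵀ * A := ⟨_, rfl⟩
  obtain ⟨M, hM⟩ : ∃ M, M = G * Aᵀ * (Bᵀ * G) := ⟨_, rfl⟩
  have hD' : D = η ^ 2 • M - η • P - η • Q := by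
    rw [hD, hP, hQ, hM]
    simp only [Matrix.sub_mul, Matrix.mul_sub, Matrix.smul_mul, Matrix.mul_smul, smul_smul,
      Matrix.mul_assoc, pow_two, smul_sub]
    abel
  have nP : ‖P‖ ≤ CB ^ 2 * Γ := by
    have h := frob_mul3 B Bᵀ G
    rw [Matrix.frobenius_norm_transpose, ← hP] at h
    refine h.trans ?_
    rw [pow_two]
    gcongr
  have nQ : ‖Q‖ ≤ CA ^ 2 * Γ := by
    have h := frob_mul3 G Aᵀ A
    rw [Matrix.frobenius_norm_transpose, ← hQ] at h
    calc ‖Q‖ ≤ _ := h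
      _ ≤ Γ * CA * CA := by gcongr
      _ = _ := by ring
  have nM : ‖M‖ ≤ CA * CB * Γ ^ 2 := by
    have h := frob_mul3 G Aᵀ (Bᵀ * G)
    have h2 := Matrix.frobenius_norm_mul Bᵀ G
    rw [Matrix.frobenius_norm_transpose] at h h2
    rw [← hM] at h
    calc ‖M‖ ≤ _ := h
      _ ≤ Γ * CA * (CB * Γ) := by
        have h3 : ‖Bᵀ * G‖ ≤ CB * Γ := h2.trans (by gcongr)
        gcongr
      _ = _ := by ring
  have tP : (Pᵀ * G).trace = ((G * Gᵀ)ᵀ * (B * Bᵀ)).trace := by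
    rw [hP]
    simp only [Matrix.transpose_mul, Matrix.transpose_transpose]
    rw [Matrix.mul_assoc, Matrix.trace_mul_comm, Matrix.mul_assoc, Matrix.trace_mul_comm]
  have tQ : (Qᵀ * G).trace = ((Aᵀ * A)ᵀ * (Gᵀ * G)).trace := by
    rw [hQ]
    simp only [Matrix.transpose_mul, Matrix.transpose_transpose, Matrix.mul_assoc]
  have tM : (Mᵀ * G).trace ≤ CA * CB * Γ ^ 3 := by
    calc _ ≤ ‖M‖ * ‖G‖ := frob_cs M G
      _ ≤ (CA * CB * Γ ^ 2) * Γ := by gcongr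
      _ = _ := by ring
  have tD : (Dᵀ * G).trace = η ^ 2 * (Mᵀ * G).trace - η * (Pᵀ * G).trace
      - η * (Qᵀ * G).trace := by
    rw [hD']
    simp [Matrix.sub_mul, Matrix.trace_sub]
  have nD : ‖D‖ ≤ η ^ 2 * (CA * CB * Γ ^ 2) + η * (CB ^ 2 * Γ) + η * (CA ^ 2 * Γ) := by
    rw [hD']
    refine (norm_sub_le _ _).trans (add_le_add ((norm_sub_le _ _).trans (add_le_add ?_ ?_)) ?_)
    all_goals
      rw [norm_smul, Real.norm_of_nonneg (by positivity)]
      gcongr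
  have nD2 : ‖D‖ ^ 2 ≤ 3 * (η ^ 4 * CA ^ 2 * CB ^ 2 * Γ ^ 4 + η ^ 2 * CA ^ 4 * Γ ^ 2 +
          η ^ 2 * CB ^ 4 * Γ ^ 2) := by
    refine (pow_le_pow_left₀ (norm_nonneg D) nD 2).trans ?_
    generalize hx : η ^ 2 * (CA * CB * Γ ^ 2) = x
    generalize hy : η * (CB ^ 2 * Γ) = y
    generalize hz : η * (CA ^ 2 * Γ) = z
    have e : η ^ 4 * CA ^ 2 * CB ^ 2 * Γ ^ 4 + η ^ 2 * CA ^ 4 * Γ ^ 2 +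
          η ^ 2 * CB ^ 4 * Γ ^ 2 = x ^ 2 + z ^ 2 + y ^ 2 := by
      rw [← hx, ← hy, ← hz]; ring
    rw [e]
    nlinarith [sq_nonneg (x - y), sq_nonneg (y - z), sq_nonneg (x - z)]
  have h1 := mul_le_mul_of_nonneg_left nD2 (by positivity : 0 ≤ L / 2)
  have h2 := mul_le_mul_of_nonneg_left tM (by positivity : 0 ≤ η ^ 2)
  have h3 := mul_le_mul_of_nonneg_left hcA hη
  have h4 := mul_le_mul_of_nonneg_left hcB hη
  rw [tD, tP, tQ] at hsmooth
  linarith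
end
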